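/- Monotonicity and self-redundancy: Red(X,Y→Z) ≤ min{I(X;Z), I(Y;Z)}, where I(X;Z) and I(Y;Z) are the mutual informations computed from the corresponding marginals of p. -/

import Mathlib

open Finset

/-- Shannon entropy of a distribution on a finite type (natural-log base). -/
noncomputable def ent {α : Type*} [Fintype α] (p : α → ℝ) : ℝ :=
  ∑ a, Real.negMulLog (p a)

/-- Mutual information between the two coordinates of a joint distribution. -/
noncomputable def mutInfo {α β : Type*} [Fintype α] [Fintype β] (q : α × β → ℝ) : ℝ :=
  ent (fun a => ∑ b, q (a, b)) + ent (fun b => ∑ a, q (a, b)) - ent q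

/-- Conditional entropy of the first coordinate given the second: H(A|B) = H(A,B) - H(B). -/
noncomputable def condEntFst {α β : Type*} [Fintype α] [Fintype β] (q : α × β → ℝ) : ℝ :=
  ent q - ent (fun b => ∑ a, q (a, b))

/-- Conditional entropy of the second coordinate given the first: H(B|A) = H(A,B) - H(A). -/
noncomputable def condEntSnd {α β : Type*} [Fintype α] [Fintype β] (q : α × β → ℝ) : ℝ :=
  ent q - ent (fun a => ∑ b, q (a, b))

section PID

variable {X Y Z : Type*} [Fintype X] [Fintype Y] [Fintype Z]

/-- 𝒳-marginal of a joint distribution on 𝒳×𝒴×𝒵. -/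
noncomputable def pX (p : X × Y × Z → ℝ) (x : X) : ℝ := ∑ y, ∑ z, p (x, y, z)

/-- 𝒴-marginal. -/
noncomputable def pY (p : X × Y × Z → ℝ) (y : Y) : ℝ := ∑ x, ∑ z, p (x, y, z)

/-- 𝒵-marginal. -/
noncomputable def pZ (p : X × Y × Z → ℝ) (z : Z) : ℝ := ∑ x, ∑ y, p (x, y, z)

/-- The do-operation: q(x,y,z) = p(x,y,z)·c(z)/p_Z(z) if p_Z(z) > 0, else 0. -/
noncomputable def doOp (p : X × Y × Z → ℝ) (c : Z → ℝ) : X × Y × Z → ℝ :=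
  fun t => if 0 < pZ p t.2.2 then p t * c t.2.2 / pZ p t.2.2 else 0

/-- (𝒳,𝒵)-marginal. -/
noncomputable def margXZ (p : X × Y × Z → ℝ) : X × Z → ℝ := fun t => ∑ y, p (t.1, y, t.2)

/-- (𝒴,𝒵)-marginal. -/
noncomputable def margYZ (p : X × Y × Z → ℝ) : Y × Z → ℝ := fun t => ∑ x, p (x, t.1, t.2)

/-- (𝒳,𝒴)-marginal. -/
noncomputable def margXY (p : X × Y × Z → ℝ) : X × Y → ℝ := fun t => ∑ z, p (t.1, t.2, z)

/-- c_y(z) = Pr(Z = z | Y = y). -/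
noncomputable def cy (p : X × Y × Z → ℝ) (y : Y) : Z → ℝ :=
  fun z => (∑ x, p (x, y, z)) / pY p y

/-- The distribution of (A_y, B_y, C_y) = do(p | c_y). -/
noncomputable def doy (p : X × Y × Z → ℝ) (y : Y) : X × Y × Z → ℝ := doOp p (cy p y)

/-- c^x(z) = Pr(Z = z | X = x). -/
noncomputable def cx (p : X × Y × Z → ℝ) (x : X) : Z → ℝ :=
  fun z => (∑ y, p (x, y, z)) / pX p x

/-- The distribution of (A^x, B^x, C^x) = do(p | c^x). -/
noncomputable def dox (p : X × Y × Z → ℝ) (x : X) : X × Y × Z → ℝ := doOp p (cx p x)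

/-- Unique information Un(X→Z|Y) = Σ_{y : p_Y(y)>0} p_Y(y)·I(A_y;C_y). -/
noncomputable def Un (p : X × Y × Z → ℝ) : ℝ :=
  ∑ y ∈ Finset.univ.filter (fun y => 0 < pY p y), pY p y * mutInfo (margXZ (doy p y))

/-- Unique information Un(Y→Z|X) = Σ_{x : p_X(x)>0} p_X(x)·I(B^x;C^x). -/
noncomputable def UnYX (p : X × Y × Z → ℝ) : ℝ :=
  ∑ x ∈ Finset.univ.filter (fun x => 0 < pX p x), pX p x * mutInfo (margYZ (dox p x))

/-- Redundant information Red(X,Y→Z) = I(X;Z) − Un(X→Z|Y). -/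
noncomputable def Red (p : X × Y × Z → ℝ) : ℝ := mutInfo (margXZ p) - Un p

/-- Conditional mutual information I(X;Z|Y) = H(X,Y) + H(Y,Z) − H(Y) − H(X,Y,Z). -/
noncomputable def condMI (p : X × Y × Z → ℝ) : ℝ :=
  ent (margXY p) + ent (margYZ p) - ent (pY p) - ent p

/-- Synergistic information Syn(X,Y→Z) = I(X;Z|Y) − Un(X→Z|Y). -/
noncomputable def Syn (p : X × Y × Z → ℝ) : ℝ := condMI p - Un p

end PID

/-!
Let `q` be the coupling of the `(𝒳,𝒵)`- and `(𝒴,𝒵)`-marginals of `p` under which `X` and `Y` are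
conditionally independent given `Z`. Conditioning `q` on `Y = y` gives exactly the law of
`(A_y, C_y)`, so `Un(X→Z|Y) = I_q(X;Z|Y)` and `Red(X,Y→Z) = I_q(X;Z) − I_q(X;Z|Y)` is the
co-information of `q`. This is symmetric in `X` and `Y`, and it is at most `I(X;Z)` because
conditional mutual information is nonnegative; by symmetry it is at most `I(Y;Z)` as well.
-/

open Real (negMulLog log)

lemma negMulLog_le_sub_sub_mul_log {x y : ℝ} (hx : 0 ≤ x) (hy : 0 ≤ y) (hxy : y = 0 → x = 0) :
    negMulLog x ≤ y - x - x * log y := by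
  rcases hx.eq_or_lt with rfl | hx
  · simpa using hy
  have hy : 0 < y := hy.lt_of_ne' fun h => hx.ne' (hxy h)
  calc negMulLog x = x * log (y / x) - x * log y := by
        rw [negMulLog, Real.log_div hy.ne' hx.ne']; ring
    _ ≤ x * (y / x - 1) - x * log y := by
        gcongr; exact Real.log_le_sub_one_of_pos (div_pos hy hx)
    _ = y - x - x * log y := by rw [mul_sub, mul_div_cancel₀ y hx.ne', mul_one]

section Entropy

variable {α β : Type*} [Fintype α] [Fintype β]

lemma ent_le_neg_sum_mul_log {q r : α → ℝ} (hq : ∀ a, 0 ≤ q a) (hr : ∀ a, 0 ≤ r a)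
    (hqr : ∀ a, r a = 0 → q a = 0) (hsum : ∑ a, r a ≤ ∑ a, q a) :
    ent q ≤ -∑ a, q a * log (r a) := by
  have hpoint : ent q ≤ ∑ a, (r a - q a - q a * log (r a)) :=
    sum_le_sum fun a _ => negMulLog_le_sub_sub_mul_log (hq a) (hr a) (hqr a)
  simp only [sum_sub_distrib] at hpoint
  linarith

lemma ent_comp_equiv (e : α ≃ β) (q : β → ℝ) : ent (fun a => q (e a)) = ent q :=
  e.sum_comp fun b => negMulLog (q b)

lemma ent_const_mul (c : ℝ) (q : α → ℝ) :
    ent (fun a => c * q a) = c * ent q + negMulLog c * ∑ a, q a := by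
  simp only [ent, Real.negMulLog_mul, sum_add_distrib, ← mul_sum, ← sum_mul]
  ring

lemma mutInfo_const_mul (c : ℝ) (q : α × β → ℝ) :
    mutInfo (fun t => c * q t) = c * mutInfo q + negMulLog c * ∑ t, q t := by
  simp only [mutInfo, ← mul_sum, ent_const_mul, ← Fintype.sum_prod_type,
    ← Fintype.sum_prod_type_right]
  ring

lemma ent_fst_add_ent_snd (q : α × β → ℝ) :
    ent (fun a => ∑ b, q (a, b)) + ent (fun b => ∑ a, q (a, b)) =
      -∑ t, q t * (log (∑ b, q (t.1, b)) + log (∑ a, q (a, t.2))) := by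
  simp only [ent, negMulLog, mul_add, sum_add_distrib, neg_mul, sum_neg_distrib, sum_mul]
  rw [Fintype.sum_prod_type, Fintype.sum_prod_type_right]
  ring

lemma mutInfo_nonneg {q : α × β → ℝ} (hq : ∀ t, 0 ≤ q t) (hsum : ∑ t, q t = 1) :
    0 ≤ mutInfo q := by
  set u : α → ℝ := fun a => ∑ b, q (a, b)
  set v : β → ℝ := fun b => ∑ a, q (a, b)
  have hu (t : α × β) : q t ≤ u t.1 :=
    single_le_sum (f := fun b => q (t.1, b)) (fun b _ => hq _) (mem_univ t.2)
  have hv (t : α × β) : q t ≤ v t.2 :=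
    single_le_sum (f := fun a => q (a, t.2)) (fun a _ => hq _) (mem_univ t.1)
  have hzero (t : α × β) (h : u t.1 * v t.2 = 0) : q t = 0 := by
    rcases mul_eq_zero.1 h with h | h
    · exact le_antisymm (h ▸ hu t) (hq t)
    · exact le_antisymm (h ▸ hv t) (hq t)
  have hmass : ∑ t : α × β, u t.1 * v t.2 = 1 := by
    rw [Fintype.sum_prod_type, ← sum_mul_sum, ← Fintype.sum_prod_type,
      ← Fintype.sum_prod_type_right, hsum, one_mul]
  have hgibbs : ent q ≤ -∑ t, q t * log (u t.1 * v t.2) :=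
    ent_le_neg_sum_mul_log hq (fun t => mul_nonneg ((hq t).trans (hu t)) ((hq t).trans (hv t)))
      hzero (hmass.trans hsum.symm).le
  have hlog (t : α × β) : q t * log (u t.1 * v t.2) = q t * (log (u t.1) + log (v t.2)) := by
    by_cases h : u t.1 * v t.2 = 0
    · rw [hzero t h, zero_mul, zero_mul]
    · rw [Real.log_mul (left_ne_zero_of_mul h) (right_ne_zero_of_mul h)]
  rw [sum_congr rfl fun t _ => hlog t, ← ent_fst_add_ent_snd q] at hgibbs
  exact sub_nonneg.2 hgibbs

end Entropy

section Marginals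

variable {X Y Z : Type*} {p : X × Y × Z → ℝ}

lemma pY_nonneg [Fintype X] [Fintype Z] (hp : ∀ t, 0 ≤ p t) (y : Y) : 0 ≤ pY p y :=
  sum_nonneg fun _ _ => sum_nonneg fun _ _ => hp _

lemma sum_prod_eq_pY [Fintype X] [Fintype Z] (p : X × Y × Z → ℝ) (y : Y) :
    ∑ t : X × Z, p (t.1, y, t.2) = pY p y :=
  Fintype.sum_prod_type _

lemma sum_margYZ_right [Fintype X] [Fintype Z] (p : X × Y × Z → ℝ) (y : Y) :
    ∑ z, margYZ p (y, z) = pY p y :=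
  sum_comm

variable [Fintype X] [Fintype Y]

lemma pZ_nonneg (hp : ∀ t, 0 ≤ p t) (z : Z) : 0 ≤ pZ p z :=
  sum_nonneg fun _ _ => sum_nonneg fun _ _ => hp _

lemma sum_margYZ_left (p : X × Y × Z → ℝ) (z : Z) : ∑ y, margYZ p (y, z) = pZ p z :=
  sum_comm

lemma margXZ_eq_zero_of_pZ_eq_zero (hp : ∀ t, 0 ≤ p t) {z : Z} (hz : pZ p z = 0) (x : X) :
    margXZ p (x, z) = 0 :=
  (sum_eq_zero_iff_of_nonneg fun _ _ => sum_nonneg fun _ _ => hp _).1 hz x (mem_univ x)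

lemma mutInfo_margXZ [Fintype Z] (p : X × Y × Z → ℝ) :
    mutInfo (margXZ p) = ent (pX p) + ent (pZ p) - ent (margXZ p) := by
  have hX : (fun x => ∑ z, margXZ p (x, z)) = pX p := funext fun x => sum_comm
  rw [mutInfo, hX]
  rfl

lemma margXZ_doOp (hp : ∀ t, 0 ≤ p t) (c : Z → ℝ) (x : X) (z : Z) :
    margXZ (doOp p c) (x, z) = margXZ p (x, z) * c z / pZ p z := by
  rcases (pZ_nonneg hp z).eq_or_lt with hz | hz
  · simp [margXZ, doOp, ← hz]
  · simp only [margXZ, doOp, if_pos hz, sum_mul, sum_div]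

end Marginals

section SwapXY

variable {X Y Z : Type*}

/-- The law of `(Y, X, Z)` when `(X, Y, Z)` has law `p`; it turns statements about one source
into statements about the other. -/
def swapXY (p : X × Y × Z → ℝ) : Y × X × Z → ℝ := fun t => p (t.2.1, t.1, t.2.2)

variable [Fintype X] [Fintype Y]

lemma pZ_swapXY (p : X × Y × Z → ℝ) : pZ (swapXY p) = pZ p :=
  funext fun _ => sum_comm

lemma ent_swapXY [Fintype Z] (p : X × Y × Z → ℝ) : ent (swapXY p) = ent p := by
  let e : Y × X × Z ≃ X × Y × Z :=
    ⟨fun t => (t.2.1, t.1, t.2.2), fun t => (t.2.1, t.1, t.2.2), fun _ => rfl, fun _ => rfl⟩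
  exact ent_comp_equiv e p

lemma ent_margXY_swapXY [Fintype Z] (p : X × Y × Z → ℝ) :
    ent (margXY (swapXY p)) = ent (margXY p) :=
  ent_comp_equiv (Equiv.prodComm Y X) (margXY p)

end SwapXY

section CondMI

variable {X Y Z : Type*} [Fintype X] [Fintype Y] [Fintype Z] {q : X × Y × Z → ℝ}

lemma condMI_eq_sum_mutInfo_sub (q : X × Y × Z → ℝ) :
    condMI q = ∑ y, (mutInfo (fun t : X × Z => q (t.1, y, t.2)) - negMulLog (pY q y)) := by
  simp only [condMI, mutInfo, ent, sum_sub_distrib, sum_add_distrib, Fintype.sum_prod_type]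
  rw [sum_comm (f := fun x y => negMulLog (margXY q (x, y))),
    sum_comm (f := fun x y => ∑ z, negMulLog (q (x, y, z)))]
  simp only [margXY, margYZ]
  ring

lemma condMI_eq_sum_pY_mul_mutInfo (hq : ∀ t, 0 ≤ q t) :
    condMI q = ∑ y, pY q y * mutInfo (fun t : X × Z => q (t.1, y, t.2) / pY q y) := by
  rw [condMI_eq_sum_mutInfo_sub]
  refine sum_congr rfl fun y _ => ?_
  by_cases hy : pY q y = 0
  · have hsum : ∑ t : X × Z, q (t.1, y, t.2) = 0 := (sum_prod_eq_pY q y).trans hy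
    have hslice : (fun t : X × Z => q (t.1, y, t.2)) = 0 :=
      (Fintype.sum_eq_zero_iff_of_nonneg fun _ => hq _).1 hsum
    rw [hslice, hy]
    simp [mutInfo, ent]
  · have h := mutInfo_const_mul (pY q y) fun t : X × Z => q (t.1, y, t.2) / pY q y
    simp only [mul_div_cancel₀ _ hy, ← sum_div, sum_prod_eq_pY, div_self hy, mul_one] at h
    exact sub_eq_of_eq_add h

lemma condMI_nonneg (hq : ∀ t, 0 ≤ q t) : 0 ≤ condMI q := by
  rw [condMI_eq_sum_pY_mul_mutInfo hq]
  refine sum_nonneg fun y _ => ?_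
  have hpY : 0 ≤ pY q y := pY_nonneg hq y
  rcases hpY.eq_or_lt with hy | hy
  · rw [← hy, zero_mul]
  · refine mul_nonneg hpY (mutInfo_nonneg (fun t => div_nonneg (hq _) hpY) ?_)
    rw [← sum_div, sum_prod_eq_pY, div_self hy.ne']

lemma mutInfo_margXZ_sub_condMI_swapXY (q : X × Y × Z → ℝ) :
    mutInfo (margXZ (swapXY q)) - condMI (swapXY q) = mutInfo (margXZ q) - condMI q := by
  have hpX : pX (swapXY q) = pY q := rfl
  have hpY : pY (swapXY q) = pX q := rfl
  have hXZ : margXZ (swapXY q) = margYZ q := rfl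
  have hYZ : margYZ (swapXY q) = margXZ q := rfl
  rw [mutInfo_margXZ, mutInfo_margXZ, condMI, condMI, ent_swapXY, ent_margXY_swapXY, pZ_swapXY,
    hpX, hpY, hXZ, hYZ]
  ring

end CondMI

section MarkovCoupling

variable {X Y Z : Type*} [Fintype X] [Fintype Y] {p : X × Y × Z → ℝ}

/-- The coupling of the `(𝒳,𝒵)`- and `(𝒴,𝒵)`-marginals of `p` that makes `X → Z → Y` a Markov
chain. Where `pZ p z = 0` the value is the junk value `0` of division by zero, as intended. -/
noncomputable def markovCoupling (p : X × Y × Z → ℝ) : X × Y × Z → ℝ :=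
  fun t => margXZ p (t.1, t.2.2) * margYZ p t.2 / pZ p t.2.2

lemma markovCoupling_nonneg (hp : ∀ t, 0 ≤ p t) (t : X × Y × Z) : 0 ≤ markovCoupling p t :=
  div_nonneg (mul_nonneg (sum_nonneg fun _ _ => hp _) (sum_nonneg fun _ _ => hp _))
    (pZ_nonneg hp _)

lemma markovCoupling_swapXY (p : X × Y × Z → ℝ) :
    markovCoupling (swapXY p) = swapXY (markovCoupling p) := by
  funext ⟨y, x, z⟩
  change margYZ p (y, z) * margXZ p (x, z) / pZ (swapXY p) z = _
  rw [pZ_swapXY, mul_comm]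
  rfl

lemma margXZ_markovCoupling (hp : ∀ t, 0 ≤ p t) : margXZ (markovCoupling p) = margXZ p := by
  funext ⟨x, z⟩
  change ∑ y, margXZ p (x, z) * margYZ p (y, z) / pZ p z = margXZ p (x, z)
  rw [← sum_div, ← mul_sum, sum_margYZ_left]
  exact mul_div_cancel_of_imp fun hz => margXZ_eq_zero_of_pZ_eq_zero hp hz x

lemma margYZ_markovCoupling (hp : ∀ t, 0 ≤ p t) : margYZ (markovCoupling p) = margYZ p :=
  calc margYZ (markovCoupling p) = margXZ (markovCoupling (swapXY p)) := by
        rw [markovCoupling_swapXY]; rfl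
    _ = margYZ p := margXZ_markovCoupling fun _ => hp _

variable [Fintype Z]

lemma pY_markovCoupling (hp : ∀ t, 0 ≤ p t) : pY (markovCoupling p) = pY p := by
  funext y
  rw [← sum_margYZ_right, margYZ_markovCoupling hp, sum_margYZ_right]

lemma margXZ_doy (hp : ∀ t, 0 ≤ p t) (y : Y) :
    margXZ (doy p y) = fun t => markovCoupling p (t.1, y, t.2) / pY p y := by
  funext ⟨x, z⟩
  rw [doy, margXZ_doOp hp, cy, ← mul_div_assoc, div_right_comm]
  rfl

lemma Un_eq_condMI_markovCoupling (hp : ∀ t, 0 ≤ p t) : Un p = condMI (markovCoupling p) := by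
  rw [condMI_eq_sum_pY_mul_mutInfo (markovCoupling_nonneg hp), pY_markovCoupling hp, Un]
  simp only [margXZ_doy hp]
  refine sum_filter_of_ne fun y _ hy => ?_
  exact (pY_nonneg hp y).lt_of_ne' (left_ne_zero_of_mul hy)

lemma Red_eq_mutInfo_sub_condMI (hp : ∀ t, 0 ≤ p t) :
    Red p = mutInfo (margXZ (markovCoupling p)) - condMI (markovCoupling p) := by
  rw [Red, Un_eq_condMI_markovCoupling hp, margXZ_markovCoupling hp]

lemma Red_swapXY (hp : ∀ t, 0 ≤ p t) : Red (swapXY p) = Red p := by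
  have hswap (t : Y × X × Z) : 0 ≤ swapXY p t := hp _
  rw [Red_eq_mutInfo_sub_condMI hswap, Red_eq_mutInfo_sub_condMI hp,
    markovCoupling_swapXY, mutInfo_margXZ_sub_condMI_swapXY]

lemma Red_le_mutInfo_margXZ (hp : ∀ t, 0 ≤ p t) : Red p ≤ mutInfo (margXZ p) := by
  rw [Red, Un_eq_condMI_markovCoupling hp]
  exact sub_le_self _ (condMI_nonneg (markovCoupling_nonneg hp))

theorem stmt13_general (p : X × Y × Z → ℝ) (hp : ∀ t, 0 ≤ p t) :
    Red p ≤ min (mutInfo (margXZ p)) (mutInfo (margYZ p)) :=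
  le_min (Red_le_mutInfo_margXZ hp) <|
    calc Red p = Red (swapXY p) := (Red_swapXY hp).symm
      _ ≤ mutInfo (margXZ (swapXY p)) := Red_le_mutInfo_margXZ fun _ => hp _
      _ = mutInfo (margYZ p) := rfl

end MarkovCoupling

theorem stmt13 {X Y Z : Type*} [Fintype X] [Fintype Y] [Fintype Z]
    [Nonempty X] [Nonempty Y] [Nonempty Z]
    (p : X × Y × Z → ℝ) (hp0 : ∀ t, 0 ≤ p t) (hp1 : ∑ t, p t = 1) :
    Red p ≤ min (mutInfo (margXZ p)) (mutInfo (margYZ p)) := by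
  exact stmt13_general p hp0
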